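/- arXiv:quant-ph/0308088 — 2 statements merged into one kernel-verified Lean document; each statement's English description precedes it below -/
import Mathlib

section
/- Squashed entanglement is subadditive on tensor products: for any states ρ^{AB} on H_A ⊗ H_B and ρ^{A'B'} on H_{A'} ⊗ H_{B'}, one has E_sq(ρ^{AB} ⊗ ρ^{A'B'}) ≤ E_sq(ρ^{AB}) + E_sq(ρ^{A'B'}), where the tensor product state is regarded as a bipartite state with respect to the cut AA' versus BB'. -/
open Matrix BigOperators Kronecker
open scoped Classical ComplexOrder

noncomputable section

/-- A (quantum) state: positive semidefinite matrix of trace 1. -/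
def IsState {n : Type*} [Fintype n] (ρ : Matrix n n ℂ) : Prop :=
  ρ.PosSemidef ∧ ρ.trace = 1

/-- Von Neumann entropy (base 2), via the eigenvalues of a Hermitian matrix. -/
def vonNeumannEntropy {n : Type*} [Fintype n] (ρ : Matrix n n ℂ) : ℝ :=
  if h : ρ.IsHermitian then ∑ i, -(h.eigenvalues i * Real.logb 2 (h.eigenvalues i)) else 0

/-- Partial trace over the second (right) factor. -/
def ptraceR {A B : Type*} [Fintype A] [Fintype B]
    (ρ : Matrix (A × B) (A × B) ℂ) : Matrix A A ℂ :=
  fun i j => ∑ b, ρ (i, b) (j, b)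

/-- Partial trace over the first (left) factor. -/
def ptraceL {A B : Type*} [Fintype A] [Fintype B]
    (ρ : Matrix (A × B) (A × B) ℂ) : Matrix B B ℂ :=
  fun i j => ∑ a, ρ (a, i) (a, j)

variable {A B E : Type*} [Fintype A] [Fintype B] [Fintype E]

/-- Marginal of a tripartite state on `A × E` (trace out `B`). -/
def margAE (ρ : Matrix (A × B × E) (A × B × E) ℂ) : Matrix (A × E) (A × E) ℂ :=
  fun x y => ∑ b, ρ (x.1, b, x.2) (y.1, b, y.2)

/-- Marginal of a tripartite state on `B × E` (trace out `A`). -/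
def margBE (ρ : Matrix (A × B × E) (A × B × E) ℂ) : Matrix (B × E) (B × E) ℂ :=
  fun x y => ∑ a, ρ (a, x.1, x.2) (a, y.1, y.2)

/-- Marginal of a tripartite state on `E` (trace out `A` and `B`). -/
def margE (ρ : Matrix (A × B × E) (A × B × E) ℂ) : Matrix E E ℂ :=
  fun x y => ∑ a, ∑ b, ρ (a, b, x) (a, b, y)

/-- Marginal of a tripartite state on `A × B` (trace out `E`). -/
def margAB (ρ : Matrix (A × B × E) (A × B × E) ℂ) : Matrix (A × B) (A × B) ℂ :=
  fun x y => ∑ e, ρ (x.1, x.2, e) (y.1, y.2, e)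

/-- Quantum conditional mutual information `I(A;B|E) = S(AE)+S(BE)-S(ABE)-S(E)`. -/
def condMutualInfo (ρ : Matrix (A × B × E) (A × B × E) ℂ) : ℝ :=
  vonNeumannEntropy (margAE ρ) + vonNeumannEntropy (margBE ρ)
    - vonNeumannEntropy ρ - vonNeumannEntropy (margE ρ)

/-- Squashed entanglement: infimum of `(1/2) I(A;B|E)` over all finite-dimensional
extensions of `ρ`. -/
def Esq {A B : Type*} [Fintype A] [Fintype B] (ρ : Matrix (A × B) (A × B) ℂ) : ℝ :=
  sInf { x : ℝ | ∃ (d : ℕ) (ρE : Matrix (A × B × Fin d) (A × B × Fin d) ℂ),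
    IsState ρE ∧ margAB ρE = ρ ∧ x = (1 / 2) * condMutualInfo ρE }

/-- Outer product `|ψ⟩⟨ψ|`. -/
def outer {n : Type*} (ψ : n → ℂ) : Matrix n n ℂ :=
  Matrix.vecMulVec ψ (star ψ)

/-- Trace norm of a Hermitian matrix: sum of the absolute values of its eigenvalues. -/
def traceNorm {n : Type*} [Fintype n] (X : Matrix n n ℂ) : ℝ :=
  if h : X.IsHermitian then ∑ i, |h.eigenvalues i| else 0

/-- Entanglement of formation: infimum of average entanglement entropy over all
finite pure-state ensembles for `ρ`. -/
def EoF {A B : Type*} [Fintype A] [Fintype B] (ρ : Matrix (A × B) (A × B) ℂ) : ℝ :=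
  sInf { x : ℝ | ∃ (n : ℕ) (p : Fin n → ℝ) (ψ : Fin n → A × B → ℂ),
    (∀ k, 0 ≤ p k) ∧ (∑ k, p k) = 1 ∧ (∀ k, ∑ i, ‖ψ k i‖ ^ 2 = 1) ∧
    (∑ k, (p k : ℂ) • outer (ψ k)) = ρ ∧
    x = ∑ k, p k * vonNeumannEntropy (ptraceR (outer (ψ k))) }

/-- The function `η` : `η(x) = -x log₂ x` for `x ≤ 1/4`, `1/2` otherwise. -/
def eta (x : ℝ) : ℝ := if x ≤ 1 / 4 then -(x * Real.logb 2 x) else 1 / 2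

section helpers

lemma vN_eq_roots_aux {n : Type*} [Fintype n] {ρ : Matrix n n ℂ} (h : ρ.IsHermitian) :
    vonNeumannEntropy ρ
      = (ρ.charpoly.roots.map (fun z : ℂ => Real.negMulLog z.re)).sum / Real.log 2 := by
  rw [vonNeumannEntropy, dif_pos h, h.roots_charpoly_eq_eigenvalues, Multiset.map_map]
  change _ = (∑ i, _) / _
  rw [Finset.sum_div]
  refine Finset.sum_congr rfl fun i _ => ?_
  simp [Real.negMulLog, Real.logb]
  ring

/-- Entropy through the roots of the characteristic polynomial. -/
lemma vN_eq_roots {n : Type*} [Fintype n] [DecidableEq n] {ρ : Matrix n n ℂ} (h : ρ.IsHermitian) :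
    vonNeumannEntropy ρ
      = (ρ.charpoly.roots.map (fun z : ℂ => Real.negMulLog z.re)).sum / Real.log 2 := by
  rw [vN_eq_roots_aux h]
  congr!

/-- Entropy from an explicit diagonalization. -/
lemma vN_of_diag {n : Type*} [Fintype n] [DecidableEq n] {ρ U : Matrix n n ℂ} {d : n → ℝ}
    (hU : Uᴴ * U = 1) (h : ρ = U * diagonal (fun i => (d i : ℂ)) * Uᴴ) :
    vonNeumannEntropy ρ = (∑ i, Real.negMulLog (d i)) / Real.log 2 := by
  have hH : ρ.IsHermitian := by
    rw [h]
    apply Matrix.isHermitian_mul_mul_conjTranspose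
    rw [Matrix.IsHermitian, diagonal_conjTranspose]
    congr 1
    ext i
    simp
  rw [vN_eq_roots hH]
  have : ρ.charpoly.roots = Multiset.map (fun i => (d i : ℂ)) Finset.univ.val := by
    rw [h, Matrix.charpoly_mul_comm, ← Matrix.mul_assoc, hU, Matrix.one_mul, charpoly_diagonal,
      Polynomial.roots_prod]
    · simp
    · simp [Finset.prod_ne_zero_iff, Polynomial.X_sub_C_ne_zero]
  rw [this, Multiset.map_map]
  rfl

/-- Spectral decomposition in plain form. -/
lemma exists_diag {n : Type*} [Fintype n] [DecidableEq n] {ρ : Matrix n n ℂ} (h : ρ.PosSemidef) :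
    ∃ (U : Matrix n n ℂ) (d : n → ℝ), Uᴴ * U = 1 ∧ U * Uᴴ = 1 ∧ (∀ i, 0 ≤ d i) ∧
      ρ = U * diagonal (fun i => (d i : ℂ)) * Uᴴ := by
  refine ⟨h.1.eigenvectorUnitary, h.1.eigenvalues, ?_, ?_, h.eigenvalues_nonneg, ?_⟩
  · rw [← star_eq_conjTranspose]; simp
  · rw [← star_eq_conjTranspose]; simp
  · exact h.1.spectral_theorem

lemma diag_trace {n : Type*} [Fintype n] [DecidableEq n] {ρ U : Matrix n n ℂ} {d : n → ℝ}
    (hU : Uᴴ * U = 1) (h : ρ = U * diagonal (fun i => (d i : ℂ)) * Uᴴ) (ht : ρ.trace = 1) :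
    ∑ i, d i = 1 := by
  rw [h, Matrix.trace_mul_comm, ← Matrix.mul_assoc, hU, Matrix.one_mul, trace_diagonal] at ht
  exact_mod_cast ht

lemma vN_submatrix {m n : Type*} [Fintype m] [Fintype n] {ρ : Matrix n n ℂ} (h : ρ.IsHermitian)
    (e : m ≃ n) : vonNeumannEntropy (ρ.submatrix e e) = vonNeumannEntropy ρ := by
  rw [vN_eq_roots h, vN_eq_roots (h.submatrix e)]
  have := Matrix.charpoly_reindex e.symm ρ
  rw [← this]
  rfl

lemma vN_kronecker {m n : Type*} [Fintype m] [Fintype n] {ρ : Matrix m m ℂ} {σ : Matrix n n ℂ}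
    (h : IsState ρ) (h' : IsState σ) :
    vonNeumannEntropy (ρ ⊗ₖ σ) = vonNeumannEntropy ρ + vonNeumannEntropy σ := by
  obtain ⟨U, d, hU, -, -, hd⟩ := exists_diag h.1
  obtain ⟨V, f, hV, -, -, hf⟩ := exists_diag h'.1
  have hW : (U ⊗ₖ V)ᴴ * (U ⊗ₖ V) = 1 := by
    rw [conjTranspose_kronecker, ← mul_kronecker_mul, hU, hV, one_kronecker_one]
  have hE : ρ ⊗ₖ σ = (U ⊗ₖ V) * diagonal (fun i : m × n => ((d i.1 * f i.2 : ℝ) : ℂ))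
      * (U ⊗ₖ V)ᴴ := by
    have : diagonal (fun i : m × n => ((d i.1 * f i.2 : ℝ) : ℂ))
        = diagonal (fun i => (d i : ℂ)) ⊗ₖ diagonal (fun i => (f i : ℂ)) := by
      rw [diagonal_kronecker_diagonal]; simp
    rw [this, conjTranspose_kronecker, ← mul_kronecker_mul, ← mul_kronecker_mul, ← hd, ← hf]
  rw [vN_of_diag hW hE, vN_of_diag hU hd, vN_of_diag hV hf, ← add_div]
  congr 1
  have h1 := diag_trace hU hd h.2
  have h2 := diag_trace hV hf h'.2
  simp only [Fintype.sum_prod_type, Real.negMulLog_mul, Finset.sum_add_distrib]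
  simp only [← Finset.sum_mul, ← Finset.mul_sum, h1, h2, one_mul]

/-- Entropies of `X Xᴴ` and `Xᴴ X` agree. -/
lemma vN_mul_comm {m n : Type*} [Fintype m] [Fintype n] (X : Matrix m n ℂ) :
    vonNeumannEntropy (X * Xᴴ) = vonNeumannEntropy (Xᴴ * X) := by
  rw [vN_eq_roots (isHermitian_mul_conjTranspose_self X),
    vN_eq_roots (isHermitian_conjTranspose_mul_self X)]
  congr 1
  have h := congrArg Polynomial.roots (Matrix.charpoly_mul_comm' X Xᴴ)
  rw [Polynomial.roots_mul, Polynomial.roots_mul] at h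
  · have h2 := congrArg (fun s => (Multiset.map (fun z : ℂ => Real.negMulLog z.re) s).sum) h
    simpa [Multiset.map_nsmul, Multiset.sum_nsmul] using h2
  · exact mul_ne_zero (pow_ne_zero _ Polynomial.X_ne_zero) (charpoly_monic _).ne_zero
  · exact mul_ne_zero (pow_ne_zero _ Polynomial.X_ne_zero) (charpoly_monic _).ne_zero

/-- Entropy increases when passing to the diagonal in some orthonormal basis. -/
lemma vN_le_diag {n : Type*} [Fintype n] [DecidableEq n] {ρ W : Matrix n n ℂ} (h : ρ.PosSemidef)
    (hW : Wᴴ * W = 1) :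
    vonNeumannEntropy ρ ≤ (∑ i, Real.negMulLog ((Wᴴ * ρ * W) i i).re) / Real.log 2 := by
  obtain ⟨U, d, hU, hU', hd0, hd⟩ := exists_diag h
  rw [vN_of_diag hU hd]
  have hW' : W * Wᴴ = 1 := mul_eq_one_comm.mp hW
  set V := Wᴴ * U with hVdef
  have hV1 : V * Vᴴ = 1 := by
    rw [hVdef, conjTranspose_mul, conjTranspose_conjTranspose, Matrix.mul_assoc,
      ← Matrix.mul_assoc U, hU', Matrix.one_mul, hW]
  have hV2 : Vᴴ * V = 1 := mul_eq_one_comm.mp hV1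
  have hrow : ∀ i, ∑ k, Complex.normSq (V i k) = 1 := by
    intro i
    have := congrFun (congrFun hV1 i) i
    simp only [mul_apply, conjTranspose_apply, one_apply_eq] at this
    have h2 := congrArg Complex.re this
    simpa [Complex.normSq_apply] using h2
  have hcol : ∀ k, ∑ i, Complex.normSq (V i k) = 1 := by
    intro i
    have := congrFun (congrFun hV2 i) i
    simp only [mul_apply, conjTranspose_apply, one_apply_eq] at this
    have h2 := congrArg Complex.re this
    simpa [Complex.normSq_apply] using h2
  have hentry : ∀ i, ((Wᴴ * ρ * W) i i).re = ∑ k, Complex.normSq (V i k) • d k := by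
    intro i
    have : Wᴴ * ρ * W = V * diagonal (fun i => (d i : ℂ)) * Vᴴ := by
      rw [hd, hVdef, conjTranspose_mul, conjTranspose_conjTranspose]
      simp only [Matrix.mul_assoc]
    rw [this, mul_apply, Complex.re_sum]
    refine Finset.sum_congr rfl fun k _ => ?_
    rw [mul_diagonal]
    simp [Complex.normSq_apply]
    ring
  refine div_le_div_of_nonneg_right ?_ (Real.log_nonneg one_le_two)
  calc ∑ k, Real.negMulLog (d k)
      = ∑ k, ∑ i, Complex.normSq (V i k) • Real.negMulLog (d k) := by
        refine Finset.sum_congr rfl fun k _ => ?_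
        rw [← Finset.sum_smul, hcol, one_smul]
    _ = ∑ i, ∑ k, Complex.normSq (V i k) • Real.negMulLog (d k) := Finset.sum_comm
    _ ≤ _ := by
        refine Finset.sum_le_sum fun i _ => ?_
        rw [hentry]
        exact Real.concaveOn_negMulLog.le_map_sum (fun k _ => Complex.normSq_nonneg _) (hrow i)
          (fun k _ => hd0 k)

lemma ptraceL_posSemidef {A E : Type*} [Fintype A] [Fintype E]
    {ρ : Matrix (A × E) (A × E) ℂ} (h : ρ.PosSemidef) : (ptraceL ρ).PosSemidef := by
  have : ptraceL ρ = ∑ a, ρ.submatrix (fun e => (a, e)) (fun e => (a, e)) := by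
    ext i j
    simp [ptraceL, Matrix.sum_apply]
  rw [this]
  exact Matrix.posSemidef_sum _ fun a _ => h.submatrix _

lemma ptraceL_trace {A E : Type*} [Fintype A] [Fintype E]
    (ρ : Matrix (A × E) (A × E) ℂ) : (ptraceL ρ).trace = ρ.trace := by
  simp only [Matrix.trace, ptraceL, Matrix.diag_apply, Fintype.sum_prod_type]
  exact Finset.sum_comm

lemma ptraceL_state {A E : Type*} [Fintype A] [Fintype E]
    {ρ : Matrix (A × E) (A × E) ℂ} (h : IsState ρ) : IsState (ptraceL ρ) :=
  ⟨ptraceL_posSemidef h.1, by rw [ptraceL_trace, h.2]⟩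

lemma submatrix_state {m n : Type*} [Fintype m] [Fintype n]
    {ρ : Matrix n n ℂ} (h : IsState ρ) (e : m ≃ n) : IsState (ρ.submatrix e e) := by
  refine ⟨h.1.submatrix e, ?_⟩
  rw [← h.2]
  simp only [Matrix.trace, Matrix.diag_apply, submatrix_apply]
  exact Equiv.sum_comp e (fun i => ρ i i)

/-- `S(AE) ≤ S(E) + log |A|`. -/
lemma vN_le_ptraceL {A E : Type*} [Fintype A] [Fintype E]
    {ρ : Matrix (A × E) (A × E) ℂ} (h : IsState ρ) :
    vonNeumannEntropy ρ ≤ vonNeumannEntropy (ptraceL ρ) + Real.logb 2 (Fintype.card A) := by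
  have hne : Nonempty A := by
    by_contra hA
    rw [not_nonempty_iff] at hA
    have := h.2
    simp [Matrix.trace] at this
  have hc : (0 : ℝ) < Fintype.card A := by exact_mod_cast Fintype.card_pos
  have hE := ptraceL_state h
  obtain ⟨U, d, hU, -, -, hd⟩ := exists_diag hE.1
  have hsum := diag_trace hU hd hE.2
  have hW : ((1 : Matrix A A ℂ) ⊗ₖ U)ᴴ * ((1 : Matrix A A ℂ) ⊗ₖ U) = 1 := by
    rw [conjTranspose_kronecker, ← mul_kronecker_mul, hU, conjTranspose_one, Matrix.one_mul,
      one_kronecker_one]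
  refine (vN_le_diag h.1 hW).trans ?_
  rw [vN_of_diag hU hd, Real.logb, ← add_div]
  refine div_le_div_of_nonneg_right ?_ (Real.log_nonneg one_le_two)
  set M := ((1 : Matrix A A ℂ) ⊗ₖ U)ᴴ * ρ * ((1 : Matrix A A ℂ) ⊗ₖ U) with hM
  have hMp : M.PosSemidef := h.1.conjTranspose_mul_mul_same _
  have hMtr : ∀ j, ∑ a, (M (a, j) (a, j)).re = d j := by
    intro j
    have hD : Uᴴ * ptraceL ρ * U = diagonal (fun i => (d i : ℂ)) := by
      rw [hd]
      simp only [Matrix.mul_assoc, hU, Matrix.mul_one]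
      rw [← Matrix.mul_assoc, hU, Matrix.one_mul]
    have hP : Uᴴ * ptraceL ρ * U = ptraceL M := by
      have hb : ∀ a i j, M (a, i) (a, j)
          = (Uᴴ * ρ.submatrix (fun e => (a, e)) (fun e => (a, e)) * U) i j := by
        intro a i j
        simp [hM, mul_apply, Fintype.sum_prod_type, one_apply, Matrix.conjTranspose_kronecker]
      have hs : ptraceL ρ = ∑ a, ρ.submatrix (fun e => (a, e)) (fun e => (a, e)) := by
        ext i j
        simp [ptraceL, Matrix.sum_apply]
      ext i j
      rw [hs, Matrix.mul_sum, Matrix.sum_mul, Matrix.sum_apply]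
      exact Finset.sum_congr rfl fun a _ => (hb a i j).symm
    have := congrFun (congrFun (hP.symm.trans hD) j) j
    have h2 := congrArg Complex.re this
    simpa [ptraceL] using h2
  have hM0 : ∀ x, 0 ≤ (M x x).re := fun x => (Complex.le_def.mp (hMp.diag_nonneg (i := x))).1
  rw [Fintype.sum_prod_type_right, ← mul_one (Real.log (Fintype.card A)), ← hsum, Finset.mul_sum,
    ← Finset.sum_add_distrib]
  refine Finset.sum_le_sum fun j _ => ?_
  have hJ := Real.concaveOn_negMulLog.le_map_sum (t := (Finset.univ : Finset A))
    (w := fun _ => (Fintype.card A : ℝ)⁻¹) (p := fun a => (M (a, j) (a, j)).re)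
    (fun _ _ => by positivity) (by simp [hc.ne']) (fun a _ => hM0 _)
  simp only [smul_eq_mul, ← Finset.mul_sum, hMtr] at hJ
  rw [Real.negMulLog_mul] at hJ
  have hl : Real.negMulLog (Fintype.card A : ℝ)⁻¹
      = (Fintype.card A : ℝ)⁻¹ * Real.log (Fintype.card A) := by
    rw [Real.negMulLog, Real.log_inv]; ring
  rw [hl] at hJ
  have := mul_le_mul_of_nonneg_left hJ hc.le
  field_simp at this
  linarith

/-- `S(E) ≤ S(AE) + log |A|`. -/
lemma ptraceL_le_vN {A E : Type*} [Fintype A] [Fintype E]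
    {ρ : Matrix (A × E) (A × E) ℂ} (h : IsState ρ) :
    vonNeumannEntropy (ptraceL ρ) ≤ vonNeumannEntropy ρ + Real.logb 2 (Fintype.card A) := by
  obtain ⟨X, hX⟩ : ∃ X : Matrix (A × E) (A × E) ℂ, ρ = X * Xᴴ := by
    obtain ⟨U, d, -, -, hd0, hd⟩ := exists_diag h.1
    refine ⟨U * diagonal (fun i => ((Real.sqrt (d i) : ℝ) : ℂ)), ?_⟩
    rw [conjTranspose_mul, diagonal_conjTranspose, Matrix.mul_assoc, ← Matrix.mul_assoc (diagonal _),
      diagonal_mul_diagonal, hd, Matrix.mul_assoc]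
    congr! 5 with i
    simp only [Pi.star_apply, RCLike.star_def, Complex.conj_ofReal]
    rw [← Complex.ofReal_mul, Real.mul_self_sqrt (hd0 i)]
  obtain ⟨Y, hY⟩ : ∃ Y : Matrix E (A × (A × E)) ℂ, ∀ e x, Y e x = X (x.1, e) x.2 :=
    ⟨fun e x => X (x.1, e) x.2, fun _ _ => rfl⟩
  have h1 : ptraceL ρ = Y * Yᴴ := by
    ext i j
    rw [hX]
    simp only [ptraceL, mul_apply, conjTranspose_apply, hY, Fintype.sum_prod_type]
  have h2 : ptraceL (Yᴴ * Y) = Xᴴ * X := by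
    ext i j
    simp only [ptraceL, mul_apply, conjTranspose_apply, hY, Fintype.sum_prod_type]
  have hst : IsState (Yᴴ * Y) := by
    refine ⟨posSemidef_conjTranspose_mul_self Y, ?_⟩
    rw [Matrix.trace_mul_comm, ← h1, ptraceL_trace, h.2]
  have := vN_le_ptraceL hst
  rwa [h2, ← vN_mul_comm, ← h1, ← vN_mul_comm, ← hX] at this

lemma margAE_state {A B E : Type*} [Fintype A] [Fintype B] [Fintype E]
    {ρ : Matrix (A × B × E) (A × B × E) ℂ} (h : IsState ρ) : IsState (margAE ρ) := by
  let e : B × (A × E) ≃ A × B × E :=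
    ⟨fun x => (x.2.1, x.1, x.2.2), fun y => (y.2.1, y.1, y.2.2), fun _ => rfl, fun _ => rfl⟩
  exact ptraceL_state (submatrix_state h e)

/-- Conditional mutual information is bounded below independently of the extension. -/
lemma condMutualInfo_lower {A B E : Type*} [Fintype A] [Fintype B] [Fintype E]
    {ρ : Matrix (A × B × E) (A × B × E) ℂ} (h : IsState ρ) :
    -(2 * Real.logb 2 (Fintype.card A)) ≤ condMutualInfo ρ := by
  have h1 := vN_le_ptraceL h
  have hBE : ptraceL ρ = margBE ρ := rfl
  rw [hBE] at h1
  have hs := margAE_state h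
  have h2 := ptraceL_le_vN hs
  have hE : ptraceL (margAE ρ) = margE ρ := rfl
  rw [hE] at h2
  unfold condMutualInfo
  linarith

/-- Rearrangement of the factors of a product extension. -/
def rearr (A A' B B' : Type*) (d d' : ℕ) :
    (A × A') × (B × B') × Fin (d * d') ≃ (A × B × Fin d) × (A' × B' × Fin d') where
  toFun x := ((x.1.1, x.2.1.1, (finProdFinEquiv.symm x.2.2).1),
    (x.1.2, x.2.1.2, (finProdFinEquiv.symm x.2.2).2))
  invFun y := ((y.1.1, y.2.1), (y.1.2.1, y.2.2.1), finProdFinEquiv (y.1.2.2, y.2.2.2))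
  left_inv x := by
    obtain ⟨⟨a, a'⟩, ⟨b, b'⟩, e⟩ := x
    simp only [Prod.mk.eta, Equiv.apply_symm_apply]
  right_inv y := by
    obtain ⟨⟨a, b, e⟩, ⟨a', b', e'⟩⟩ := y
    simp only [Equiv.symm_apply_apply]

/-- Rearrangement of two-factor systems. -/
def rearr2 (A A' : Type*) (d d' : ℕ) :
    (A × A') × Fin (d * d') ≃ (A × Fin d) × (A' × Fin d') where
  toFun x := ((x.1.1, (finProdFinEquiv.symm x.2).1), (x.1.2, (finProdFinEquiv.symm x.2).2))
  invFun y := ((y.1.1, y.2.1), finProdFinEquiv (y.1.2, y.2.2))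
  left_inv x := by
    obtain ⟨⟨a, a'⟩, e⟩ := x
    simp only [Prod.mk.eta, Equiv.apply_symm_apply]
  right_inv y := by
    obtain ⟨⟨a, e⟩, ⟨a', e'⟩⟩ := y
    simp only [Equiv.symm_apply_apply]

lemma kron_state {m n : Type*} [Fintype m] [Fintype n] {ρ : Matrix m m ℂ} {σ : Matrix n n ℂ}
    (h : IsState ρ) (h' : IsState σ) : IsState (ρ ⊗ₖ σ) :=
  ⟨h.1.kronecker h'.1, by rw [trace_kronecker, h.2, h'.2, one_mul]⟩

section prodext

variable {A A' B B' : Type*} [Fintype A] [Fintype A'] [Fintype B] [Fintype B'] {d d' : ℕ}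
  (ρ : Matrix (A × B × Fin d) (A × B × Fin d) ℂ)
  (σ : Matrix (A' × B' × Fin d') (A' × B' × Fin d') ℂ)

/-- The product extension. -/
def prodExt : Matrix ((A × A') × (B × B') × Fin (d * d')) ((A × A') × (B × B') × Fin (d * d')) ℂ :=
  (ρ ⊗ₖ σ).submatrix (rearr A A' B B' d d') (rearr A A' B B' d d')

lemma prodExt_margAB : margAB (prodExt ρ σ)
    = Matrix.reindex (Equiv.prodProdProdComm A B A' B') (Equiv.prodProdProdComm A B A' B')
          (margAB ρ ⊗ₖ margAB σ) := by
  ext ⟨⟨a, a'⟩, ⟨b, b'⟩⟩ ⟨⟨c, c'⟩, ⟨e, e'⟩⟩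
  simp only [margAB, prodExt, submatrix_apply, kroneckerMap_apply, rearr, reindex_apply,
    Equiv.coe_fn_mk, Equiv.prodProdProdComm_symm, Equiv.prodProdProdComm_apply]
  rw [← Equiv.sum_comp finProdFinEquiv]
  simp only [Equiv.symm_apply_apply, Fintype.sum_prod_type, Finset.sum_mul_sum]

lemma prodExt_margAE : margAE (prodExt ρ σ)
    = (margAE ρ ⊗ₖ margAE σ).submatrix (rearr2 A A' d d') (rearr2 A A' d d') := by
  ext ⟨⟨a, a'⟩, e⟩ ⟨⟨c, c'⟩, f⟩
  simp only [margAE, prodExt, submatrix_apply, kroneckerMap_apply, rearr, rearr2,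
    Equiv.coe_fn_mk, Fintype.sum_prod_type, Finset.sum_mul_sum]

lemma prodExt_margBE : margBE (prodExt ρ σ)
    = (margBE ρ ⊗ₖ margBE σ).submatrix (rearr2 B B' d d') (rearr2 B B' d d') := by
  ext ⟨⟨a, a'⟩, e⟩ ⟨⟨c, c'⟩, f⟩
  simp only [margBE, prodExt, submatrix_apply, kroneckerMap_apply, rearr, rearr2,
    Equiv.coe_fn_mk, Fintype.sum_prod_type, Finset.sum_mul_sum]

lemma prodExt_margE : margE (prodExt ρ σ)
    = (margE ρ ⊗ₖ margE σ).submatrix finProdFinEquiv.symm finProdFinEquiv.symm := by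
  ext x y
  simp only [margE, prodExt, submatrix_apply, kroneckerMap_apply, rearr,
    Equiv.coe_fn_mk, Fintype.sum_prod_type, Finset.sum_mul_sum]

variable {ρ σ}

lemma prodExt_condMutualInfo (h : IsState ρ) (h' : IsState σ) :
    condMutualInfo (prodExt ρ σ) = condMutualInfo ρ + condMutualInfo σ := by
  have a := margAE_state h
  have a' := margAE_state h'
  have b : IsState (margBE ρ) := ptraceL_state h
  have b' : IsState (margBE σ) := ptraceL_state h'
  have e : IsState (margE ρ) := ptraceL_state a
  have e' : IsState (margE σ) := ptraceL_state a'
  unfold condMutualInfo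
  rw [prodExt_margAE, prodExt_margBE, prodExt_margE, prodExt,
    vN_submatrix (kron_state a a').1.1, vN_submatrix (kron_state b b').1.1,
    vN_submatrix (kron_state e e').1.1, vN_submatrix (kron_state h h').1.1,
    vN_kronecker a a', vN_kronecker b b', vN_kronecker e e', vN_kronecker h h']
  ring

end prodext

/-- Every state has an extension. -/
lemma exists_ext {A B : Type*} [Fintype A] [Fintype B] {ρ : Matrix (A × B) (A × B) ℂ}
    (h : IsState ρ) : { x : ℝ | ∃ (d : ℕ) (ρE : Matrix (A × B × Fin d) (A × B × Fin d) ℂ),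
    IsState ρE ∧ margAB ρE = ρ ∧ x = (1 / 2) * condMutualInfo ρE }.Nonempty := by
  let e : A × B × Fin 1 ≃ A × B :=
    (Equiv.prodAssoc A B (Fin 1)).symm.trans (Equiv.prodUnique (A × B) (Fin 1))
  refine ⟨_, 1, ρ.submatrix e e, submatrix_state h e, ?_, rfl⟩
  ext x y
  simp [margAB, e]

end helpers

/-- Squashed entanglement is subadditive on tensor products:
`E_sq(ρ^{AB} ⊗ ρ^{A'B'}) ≤ E_sq(ρ^{AB}) + E_sq(ρ^{A'B'})`, where the tensor product is
regarded as a bipartite state with respect to the cut `AA'` versus `BB'`. -/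
theorem squashedEntanglement_subadditive_tensor
    {A A' B B' : Type*} [Fintype A] [Fintype A'] [Fintype B] [Fintype B']
    (ρ : Matrix (A × B) (A × B) ℂ) (ρ' : Matrix (A' × B') (A' × B') ℂ)
    (hρ : IsState ρ) (hρ' : IsState ρ') :
    Esq (Matrix.reindex (Equiv.prodProdProdComm A B A' B') (Equiv.prodProdProdComm A B A' B')
          (ρ ⊗ₖ ρ'))
      ≤ Esq ρ + Esq ρ' := by
  unfold Esq
  have key : ∀ x ∈ { x : ℝ | ∃ (d : ℕ) (ρE : Matrix (A × B × Fin d) (A × B × Fin d) ℂ),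
      IsState ρE ∧ margAB ρE = ρ ∧ x = (1 / 2) * condMutualInfo ρE },
      ∀ y ∈ { x : ℝ | ∃ (d : ℕ) (ρE : Matrix (A' × B' × Fin d) (A' × B' × Fin d) ℂ),
      IsState ρE ∧ margAB ρE = ρ' ∧ x = (1 / 2) * condMutualInfo ρE },
      Esq (Matrix.reindex (Equiv.prodProdProdComm A B A' B') (Equiv.prodProdProdComm A B A' B')
          (ρ ⊗ₖ ρ')) ≤ x + y := by
    rintro x ⟨d, τ, hτ, hm, rfl⟩ y ⟨d', σ, hσ, hm', rfl⟩
    refine csInf_le ?_ ⟨d * d', prodExt τ σ, submatrix_state (kron_state hτ hσ) _, ?_, ?_⟩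
    · refine ⟨(1 / 2) * -(2 * Real.logb 2 (Fintype.card (A × A'))), ?_⟩
      rintro z ⟨k, ω, hω, -, rfl⟩
      have := condMutualInfo_lower hω
      linarith
    · rw [prodExt_margAB, hm, hm']
    · rw [prodExt_condMutualInfo hτ hσ]
      ring
  have h1 : ∀ y ∈ { x : ℝ | ∃ (d : ℕ) (ρE : Matrix (A' × B' × Fin d) (A' × B' × Fin d) ℂ),
      IsState ρE ∧ margAB ρE = ρ' ∧ x = (1 / 2) * condMutualInfo ρE },
      Esq (Matrix.reindex (Equiv.prodProdProdComm A B A' B') (Equiv.prodProdProdComm A B A' B')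
          (ρ ⊗ₖ ρ')) - Esq ρ ≤ y := by
    intro y hy
    have : Esq (Matrix.reindex (Equiv.prodProdProdComm A B A' B')
        (Equiv.prodProdProdComm A B A' B') (ρ ⊗ₖ ρ')) - y ≤ Esq ρ :=
      le_csInf (exists_ext hρ) fun x hx => by linarith [key x hx y hy]
    linarith
  have h2 := le_csInf (exists_ext hρ') h1
  exact sub_le_iff_le_add'.mp h2

end
end

section
/- Let {(p_k, |Ψ_k⟩)}_{k=1}^n be a finite pure-state ensemble for ρ^{AB}, i.e. ∑_k p_k |Ψ_k⟩⟨Ψ_k| = ρ^{AB} with unit vectors |Ψ_k⟩ ∈ H_A ⊗ H_B, and let (|k⟩)_{k=1}^n be an orthonormal basis of H_E = ℂⁿ. Then ρ^{ABE} = ∑_k p_k |Ψ_k⟩⟨Ψ_k| ⊗ |k⟩⟨k| is an extension of ρ^{AB} and satisfies (1/2) I(A;B|E) = ∑_k p_k S(Tr_B |Ψ_k⟩⟨Ψ_k|). -/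
open Matrix BigOperators Kronecker
open scoped Classical ComplexOrder

noncomputable section

variable {A B E : Type*} [Fintype A] [Fintype B] [Fintype E]

/-- The classical-flag extension `∑_k p_k |Ψ_k⟩⟨Ψ_k| ⊗ |k⟩⟨k|` of an ensemble. -/
def ensembleExtension {A B : Type*} (n : ℕ) (p : Fin n → ℝ) (ψ : Fin n → A × B → ℂ) :
    Matrix (A × B × Fin n) (A × B × Fin n) ℂ :=
  fun x y => if x.2.2 = y.2.2
    then (p x.2.2 : ℂ) * ψ x.2.2 (x.1, x.2.1) * star (ψ x.2.2 (y.1, y.2.1))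
    else 0

/-- `-z log₂ z` on complex numbers, through the real part. -/
def fEnt (z : ℂ) : ℝ := -(z.re * Real.logb 2 z.re)

/-- Sum of `fEnt` over the roots of a polynomial. -/
def pEnt (P : Polynomial ℂ) : ℝ := (P.roots.map fEnt).sum

lemma pEnt_mul {P Q : Polynomial ℂ} (hP : P ≠ 0) (hQ : Q ≠ 0) :
    pEnt (P * Q) = pEnt P + pEnt Q := by
  simp [pEnt, Polynomial.roots_mul (mul_ne_zero hP hQ)]

lemma pEnt_X_pow (k : ℕ) : pEnt (Polynomial.X ^ k) = 0 := by
  simp [pEnt, fEnt, Multiset.map_nsmul, Multiset.sum_nsmul]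

lemma pEnt_prod {ι : Type*} (s : Finset ι) (P : ι → Polynomial ℂ) (hP : ∀ i, P i ≠ 0) :
    pEnt (∏ i ∈ s, P i) = ∑ i ∈ s, pEnt (P i) := by
  induction s using Finset.induction_on with
  | empty => simp [pEnt]
  | insert a s ha ih =>
    rw [Finset.prod_insert ha, Finset.sum_insert ha,
      pEnt_mul (hP a) (Finset.prod_ne_zero_iff.2 fun i _ => hP i), ih]

lemma pEnt_X_sub_C (z : ℂ) : pEnt (Polynomial.X - Polynomial.C z) = fEnt z := by
  simp [pEnt]

lemma entropy_eq {m : Type*} [Fintype m] [inst : DecidableEq m] {M : Matrix m m ℂ}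
    (h : M.IsHermitian) : vonNeumannEntropy M = pEnt M.charpoly := by
  have : inst = fun a b => Classical.propDecidable (a = b) := Subsingleton.elim _ _
  subst this
  rw [vonNeumannEntropy, dif_pos h, h.charpoly_eq, pEnt_prod _ _
    (fun i => Polynomial.X_sub_C_ne_zero _)]
  simp [pEnt_X_sub_C, fEnt]

lemma charpoly_ne_zero' {m : Type*} [Fintype m] [DecidableEq m] (M : Matrix m m ℂ) :
    M.charpoly ≠ 0 := (Matrix.charpoly_monic M).ne_zero

lemma pEnt_mul_comm {m k : Type*} [Fintype m] [Fintype k] [DecidableEq m] [DecidableEq k]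
    (M : Matrix m k ℂ) (N : Matrix k m ℂ) :
    pEnt (M * N).charpoly = pEnt (N * M).charpoly := by
  have h := congrArg pEnt (Matrix.charpoly_mul_comm' M N)
  rwa [pEnt_mul (pow_ne_zero _ Polynomial.X_ne_zero) (charpoly_ne_zero' _),
    pEnt_mul (pow_ne_zero _ Polynomial.X_ne_zero) (charpoly_ne_zero' _), pEnt_X_pow, pEnt_X_pow,
    zero_add, zero_add] at h

lemma charpoly_blockDiagonal {m o : Type*} [Fintype m] [DecidableEq m] [Fintype o] [DecidableEq o]
    (M : o → Matrix m m ℂ) :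
    (Matrix.blockDiagonal M).charpoly = ∏ k, (M k).charpoly := by
  have : (Matrix.blockDiagonal M).charmatrix = Matrix.blockDiagonal fun k => (M k).charmatrix := by
    ext ⟨i, k⟩ ⟨j, l⟩ : 2
    by_cases hk : k = l
    · subst hk
      simp [Matrix.charmatrix_apply, Matrix.blockDiagonal_apply, Matrix.diagonal_apply]
    · simp [Matrix.charmatrix_apply, Matrix.blockDiagonal_apply, Matrix.diagonal_apply, hk]
  rw [Matrix.charpoly, this, Matrix.det_blockDiagonal]
  rfl

lemma charpoly_smul_herm {m : Type*} [Fintype m] [DecidableEq m] {M : Matrix m m ℂ}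
    (h : M.IsHermitian) (q : ℝ) :
    ((q : ℂ) • M).charpoly
      = ∏ i, (Polynomial.X - Polynomial.C ((q * h.eigenvalues i : ℝ) : ℂ)) := by
  conv_lhs => rw [h.spectral_theorem, Unitary.conjStarAlgAut_apply, ← Matrix.smul_mul,
    Matrix.charpoly_mul_comm, ← Matrix.mul_smul, ← mul_assoc]
  simp [Matrix.charpoly_diagonal, ← Matrix.diagonal_smul]

lemma pEnt_smul {m : Type*} [Fintype m] [DecidableEq m] {M : Matrix m m ℂ}
    (h : M.IsHermitian) (ht : M.trace = 1) (q : ℝ) :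
    pEnt ((q : ℂ) • M).charpoly = q * pEnt M.charpoly + fEnt q := by
  have hs : ∑ i, h.eigenvalues i = 1 := by
    have := h.trace_eq_sum_eigenvalues
    rw [ht] at this
    have h2 := congrArg Complex.re this
    simpa using h2.symm
  rw [charpoly_smul_herm h, h.charpoly_eq,
    pEnt_prod _ _ (fun i => Polynomial.X_sub_C_ne_zero _),
    pEnt_prod _ _ (fun i => Polynomial.X_sub_C_ne_zero _)]
  simp only [pEnt_X_sub_C]
  have : fEnt q = ∑ i, h.eigenvalues i * fEnt q := by rw [← Finset.sum_mul, hs, one_mul]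
  rw [this, Finset.mul_sum, ← Finset.sum_add_distrib]
  refine Finset.sum_congr rfl fun i _ => ?_
  simp only [fEnt, Complex.ofReal_re, Complex.coe_algebraMap]
  by_cases hq : q = 0
  · simp [hq]
  by_cases hl : h.eigenvalues i = 0
  · simp [hl]
  rw [Real.logb_mul hq hl]
  ring

lemma isHermitian_blockDiagonal' {m o : Type*} [DecidableEq o]
    {M : o → Matrix m m ℂ} (h : ∀ k, (M k).IsHermitian) :
    (Matrix.blockDiagonal M).IsHermitian := by
  rw [Matrix.IsHermitian, Matrix.blockDiagonal_conjTranspose]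
  congr 1
  funext k
  exact h k

lemma smul_real_herm {m : Type*} {M : Matrix m m ℂ} (h : M.IsHermitian) (q : ℝ) :
    ((q : ℂ) • M).IsHermitian := by
  rw [Matrix.IsHermitian, Matrix.conjTranspose_smul, h.eq]
  simp

/-- Entropy of a classical-quantum state. -/
lemma entropy_block {m o : Type*} [Fintype m] [DecidableEq m] [Fintype o] [DecidableEq o]
    (M : o → Matrix m m ℂ) (h : ∀ k, (M k).IsHermitian) (ht : ∀ k, (M k).trace = 1)
    (q : o → ℝ) :
    vonNeumannEntropy (Matrix.blockDiagonal fun k => (q k : ℂ) • M k)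
      = ∑ k, (q k * vonNeumannEntropy (M k) + fEnt (q k)) := by
  rw [entropy_eq (isHermitian_blockDiagonal' fun k => smul_real_herm (h k) (q k)),
    charpoly_blockDiagonal, pEnt_prod _ _ fun k => charpoly_ne_zero' _]
  refine Finset.sum_congr rfl fun k _ => ?_
  rw [pEnt_smul (h k) (ht k), entropy_eq (h k)]

lemma outer_herm {m : Type*} (v : m → ℂ) : (outer v).IsHermitian := by
  ext i j
  simp [outer, Matrix.vecMulVec_apply, mul_comm]

lemma sum_mul_star {m : Type*} [Fintype m] {v : m → ℂ} (hv : ∑ i, ‖v i‖ ^ 2 = 1) :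
    ∑ i, v i * star (v i) = 1 := by
  have : ∀ i, v i * star (v i) = ((‖v i‖ ^ 2 : ℝ) : ℂ) := fun i => by
    push_cast
    exact Complex.mul_conj' (v i)
  simp only [this]
  rw [← Complex.ofReal_sum, hv, Complex.ofReal_one]

lemma outer_trace {m : Type*} [Fintype m] {v : m → ℂ} (hv : ∑ i, ‖v i‖ ^ 2 = 1) :
    (outer v).trace = 1 := by
  rw [← sum_mul_star hv]
  rfl

lemma outer_entropy {m : Type*} [Fintype m] {v : m → ℂ} (hv : ∑ i, ‖v i‖ ^ 2 = 1) :
    vonNeumannEntropy (outer v) = 0 := by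
  rw [entropy_eq (outer_herm v), outer, Matrix.vecMulVec_eq (ι := Unit), pEnt_mul_comm]
  have : (Matrix.replicateRow Unit (star v) * Matrix.replicateCol Unit v)
      = Matrix.diagonal fun _ => (1 : ℂ) := by
    ext i j
    rw [← sum_mul_star hv]
    simp [Matrix.mul_apply, mul_comm]
  rw [this, Matrix.charpoly_diagonal]
  simp only [Finset.univ_unique, Finset.prod_singleton, pEnt_X_sub_C]
  simp [fEnt]

/-- Coefficient matrix of a bipartite vector. -/
def coefM {a b : Type*} (v : a × b → ℂ) : Matrix a b ℂ := fun i j => v (i, j)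

lemma ptraceR_outer {a b : Type*} [Fintype a] [Fintype b] (v : a × b → ℂ) :
    ptraceR (outer v) = coefM v * (coefM v)ᴴ := by
  ext i j
  simp [ptraceR, outer, coefM, Matrix.mul_apply, Matrix.vecMulVec_apply]

lemma ptraceL_outer {a b : Type*} [Fintype a] [Fintype b] (v : a × b → ℂ) :
    ptraceL (outer v) = ((coefM v)ᴴ * coefM v)ᵀ := by
  ext i j
  simp [ptraceL, outer, coefM, Matrix.mul_apply, Matrix.vecMulVec_apply, mul_comm]

lemma ptraceR_herm {a b : Type*} [Fintype a] [Fintype b] (v : a × b → ℂ) :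
    (ptraceR (outer v)).IsHermitian := by
  rw [ptraceR_outer]
  exact Matrix.isHermitian_mul_conjTranspose_self _

lemma ptraceL_herm {a b : Type*} [Fintype a] [Fintype b] (v : a × b → ℂ) :
    (ptraceL (outer v)).IsHermitian := by
  rw [ptraceL_outer]
  exact (Matrix.isHermitian_conjTranspose_mul_self _).transpose

lemma ptrace_entropy {a b : Type*} [Fintype a] [Fintype b] (v : a × b → ℂ) :
    vonNeumannEntropy (ptraceL (outer v)) = vonNeumannEntropy (ptraceR (outer v)) := by
  rw [entropy_eq (ptraceL_herm v), entropy_eq (ptraceR_herm v), ptraceR_outer, ptraceL_outer,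
    Matrix.charpoly_transpose, pEnt_mul_comm]

lemma ptraceR_trace {a b : Type*} [Fintype a] [Fintype b] (M : Matrix (a × b) (a × b) ℂ) :
    (ptraceR M).trace = M.trace := by
  simp [Matrix.trace, ptraceR, Fintype.sum_prod_type]

lemma ptraceL_trace_s8 {a b : Type*} [Fintype a] [Fintype b] (M : Matrix (a × b) (a × b) ℂ) :
    (ptraceL M).trace = M.trace := by
  simp [Matrix.trace, ptraceL, Fintype.sum_prod_type_right]

lemma ext_eq {a b : Type*} (n : ℕ) (p : Fin n → ℝ) (ψ : Fin n → a × b → ℂ) :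
    ensembleExtension n p ψ = Matrix.reindex (Equiv.prodAssoc a b (Fin n))
      (Equiv.prodAssoc a b (Fin n)) (Matrix.blockDiagonal fun k => (p k : ℂ) • outer (ψ k)) := by
  ext ⟨i, j, k⟩ ⟨i', j', k'⟩
  simp [ensembleExtension, Matrix.blockDiagonal_apply, outer, Matrix.vecMulVec_apply, mul_assoc]

lemma margAE_ext {a b : Type*} [Fintype a] [Fintype b]
    (n : ℕ) (p : Fin n → ℝ) (ψ : Fin n → a × b → ℂ) :
    margAE (ensembleExtension n p ψ)
      = Matrix.blockDiagonal fun k => (p k : ℂ) • ptraceR (outer (ψ k)) := by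
  ext ⟨i, k⟩ ⟨i', k'⟩
  by_cases h : k = k' <;>
  simp [margAE, ensembleExtension, Matrix.blockDiagonal_apply, ptraceR, outer,
    Matrix.vecMulVec_apply, mul_assoc, Finset.mul_sum, h]

lemma margBE_ext {a b : Type*} [Fintype a] [Fintype b]
    (n : ℕ) (p : Fin n → ℝ) (ψ : Fin n → a × b → ℂ) :
    margBE (ensembleExtension n p ψ)
      = Matrix.blockDiagonal fun k => (p k : ℂ) • ptraceL (outer (ψ k)) := by
  ext ⟨i, k⟩ ⟨i', k'⟩
  by_cases h : k = k' <;>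
  simp [margBE, ensembleExtension, Matrix.blockDiagonal_apply, ptraceL, outer,
    Matrix.vecMulVec_apply, mul_assoc, Finset.mul_sum, h]

lemma margE_ext {a b : Type*} [Fintype a] [Fintype b]
    (n : ℕ) (p : Fin n → ℝ) (ψ : Fin n → a × b → ℂ) (hψ : ∀ k, ∑ i, ‖ψ k i‖ ^ 2 = 1) :
    margE (ensembleExtension n p ψ) = Matrix.diagonal fun k => (p k : ℂ) := by
  ext k k'
  by_cases h : k = k'
  · subst h
    have := sum_mul_star (hψ k)
    rw [Fintype.sum_prod_type] at this
    simp only [margE, ensembleExtension, if_true, mul_assoc, ← Finset.mul_sum, this,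
      Matrix.diagonal_apply_eq, mul_one]
  · simp [margE, ensembleExtension, h]

lemma entropy_reindex {m k : Type*} [Fintype m] [Fintype k] (e : m ≃ k) {M : Matrix m m ℂ}
    (h : M.IsHermitian) : vonNeumannEntropy (Matrix.reindex e e M) = vonNeumannEntropy M := by
  have h' : (Matrix.reindex e e M).IsHermitian := h.submatrix e.symm
  rw [entropy_eq h, entropy_eq h', Matrix.charpoly_reindex]

lemma ext_posSemidef {a b : Type*} [Fintype a] [Fintype b]
    (n : ℕ) (p : Fin n → ℝ) (ψ : Fin n → a × b → ℂ) (hp : ∀ k, 0 ≤ p k) :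
    (ensembleExtension n p ψ).PosSemidef := by
  have : ensembleExtension n p ψ = ∑ k, (p k : ℂ) • Matrix.vecMulVec
      (fun x : a × b × Fin n => if x.2.2 = k then ψ k (x.1, x.2.1) else 0)
      (star fun x : a × b × Fin n => if x.2.2 = k then ψ k (x.1, x.2.1) else 0) := by
    ext ⟨i, j, k⟩ ⟨i', j', k'⟩
    rw [Matrix.sum_apply, Finset.sum_eq_single k]
    · by_cases h : k = k'
      · simp [ensembleExtension, Matrix.vecMulVec_apply, h, mul_assoc]
      · simp [ensembleExtension, Matrix.vecMulVec_apply, h, Ne.symm h]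
    · intro l _ hl
      simp [Matrix.vecMulVec_apply, Ne.symm hl]
    · simp
  rw [this]
  refine Matrix.posSemidef_sum _ fun k _ => ?_
  refine (Matrix.posSemidef_vecMulVec_self_star _).smul ?_
  exact_mod_cast hp k

/-- For a finite pure-state ensemble `{(p_k, |Ψ_k⟩)}` of `ρ^{AB}`, the state
`ρ^{ABE} = ∑_k p_k |Ψ_k⟩⟨Ψ_k| ⊗ |k⟩⟨k|` is an extension of `ρ^{AB}` and satisfies
`(1/2) I(A;B|E) = ∑_k p_k S(Tr_B |Ψ_k⟩⟨Ψ_k|)`. -/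
theorem ensembleExtension_is_extension_and_cmi
    {A B : Type*} [Fintype A] [Fintype B]
    (ρ : Matrix (A × B) (A × B) ℂ)
    (n : ℕ) (p : Fin n → ℝ) (ψ : Fin n → A × B → ℂ)
    (hp : ∀ k, 0 ≤ p k) (hp1 : (∑ k, p k) = 1)
    (hψ : ∀ k, ∑ i, ‖ψ k i‖ ^ 2 = 1)
    (hens : (∑ k, (p k : ℂ) • outer (ψ k)) = ρ) :
    IsState (ensembleExtension n p ψ) ∧
    margAB (ensembleExtension n p ψ) = ρ ∧
    (1 / 2) * condMutualInfo (ensembleExtension n p ψ)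
      = ∑ k, p k * vonNeumannEntropy (ptraceR (outer (ψ k))) := by
  refine ⟨⟨ext_posSemidef n p ψ hp, ?_⟩, ?_, ?_⟩
  · have h : (ensembleExtension n p ψ).trace = (margE (ensembleExtension n p ψ)).trace := by
      simp only [Matrix.trace, margE, Matrix.diag_apply, Fintype.sum_prod_type]
      rw [Finset.sum_comm]
      rw [Finset.sum_comm]
      simp_rw [fun a : A => Finset.sum_comm (s := (Finset.univ : Finset B))
        (t := (Finset.univ : Finset (Fin n)))
        (f := fun b k => ensembleExtension n p ψ (a, b, k) (a, b, k))]
      rw [Finset.sum_comm]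
    rw [h, margE_ext n p ψ hψ, Matrix.trace_diagonal]
    exact_mod_cast hp1
  · rw [← hens]
    ext ⟨i, j⟩ ⟨i', j'⟩
    simp [margAB, ensembleExtension, Matrix.sum_apply, outer, Matrix.vecMulVec_apply, mul_assoc]
  · have hE : vonNeumannEntropy (margE (ensembleExtension n p ψ)) = ∑ k, fEnt (p k) := by
      rw [margE_ext n p ψ hψ, entropy_eq (Matrix.isHermitian_diagonal_of_self_adjoint _ (by
        ext k; simp)), Matrix.charpoly_diagonal,
        pEnt_prod _ _ fun i => Polynomial.X_sub_C_ne_zero _]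
      simp only [pEnt_X_sub_C]
    have hABE : vonNeumannEntropy (ensembleExtension n p ψ) = ∑ k, fEnt (p k) := by
      rw [ext_eq, entropy_reindex _ (isHermitian_blockDiagonal' fun k =>
        smul_real_herm (outer_herm _) _),
        entropy_block _ (fun k => outer_herm _) (fun k => outer_trace (hψ k))]
      simp [outer_entropy (hψ _)]
    rw [condMutualInfo, hE, hABE, margAE_ext, margBE_ext,
      entropy_block _ (fun k => ptraceR_herm _)
        (fun k => by rw [ptraceR_trace, outer_trace (hψ k)]),
      entropy_block _ (fun k => ptraceL_herm _)
        (fun k => by rw [ptraceL_trace_s8, outer_trace (hψ k)])]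
    simp only [ptrace_entropy, Finset.sum_add_distrib]
    ring

end
end
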